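/- Let α ∈ (0,1) and suppose that both d₁ and d₂ are of type ν for some ν ≥ 0. Let s > 1/2 and let s₁ ∈ ℝ satisfy s₁ − s < min{1, s − ν}. Then there exists a constant C > 0 (depending on α, s, s₁, ν and the type constant K) such that for all sequences a, b : ℤ → ℂ with a₀ = 0, Σ_{k ∈ ℤ} ⟨k⟩^{2s₁} | Σ_{k₁ ∈ ℤ, k₁ ≠ 0} k · a_{k₁} b_{k − k₁} / (αk³ − k₁³ − α(k − k₁)³) |² ≤ C · (Σ_{m ∈ ℤ} ⟨m⟩^{2s} |a_m|²) · (Σ_{n ∈ ℤ} ⟨n⟩^{2s} |b_n|²). (For k₁ ≠ 0 the denominator αk³ − k₁³ − α(k − k₁)³ = −(1 − α)k₁(k₁ − d₁k)(k₁ − d₂k) never vanishes, since d₁ and d₂ are irrational.) -/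

import Mathlib

/-- The Japanese bracket `⟨x⟩ = (1 + x²)^{1/2}`. -/
noncomputable def jb (x : ℝ) : ℝ := Real.sqrt (1 + x^2)

/-- The larger root `c₁ = 1/2 + √(12/α − 3)/6` of `3αx² − 3αx + (α − 1)`. -/
noncomputable def c1 (α : ℝ) : ℝ := 1/2 + Real.sqrt (12/α - 3)/6

/-- The smaller root `c₂ = 1/2 − √(12/α − 3)/6` of `3αx² − 3αx + (α − 1)`. -/
noncomputable def c2 (α : ℝ) : ℝ := 1/2 - Real.sqrt (12/α - 3)/6

/-- `d₁ = 1/c₁`. -/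
noncomputable def d1 (α : ℝ) : ℝ := (c1 α)⁻¹

/-- `d₂ = 1/c₂`. -/
noncomputable def d2 (α : ℝ) : ℝ := (c2 α)⁻¹

/-- A real number `ρ` is of type `ν` if there is `K > 0` with
`|ρ − m/n| ≥ K/|n|^{2+ν}` for all integers `m` and all nonzero integers `n`. -/
def IsOfType (ρ ν : ℝ) : Prop :=
  ∃ K > 0, ∀ m n : ℤ, n ≠ 0 → K / |(n : ℝ)| ^ (2 + ν) ≤ |ρ - (m : ℝ) / (n : ℝ)|

/-- The `k₁`-summand of the bilinear form `B₂` (restricted to `k₁ ≠ 0`):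
`k·a_{k₁}·b_{k−k₁}/(αk³ − k₁³ − α(k−k₁)³)`. -/
noncomputable def B2term (α : ℝ) (a b : ℤ → ℂ) (k k₁ : ℤ) : ℂ :=
  if k₁ = 0 then 0
  else ((k : ℂ) * a k₁ * b (k - k₁)) /
    ((((α * (k : ℝ)^3 - (k₁ : ℝ)^3 - α * ((k : ℝ) - (k₁ : ℝ))^3 : ℝ)) : ℂ))

lemma jb_sq (x : ℝ) : jb x ^ 2 = 1 + x^2 := Real.sq_sqrt (by positivity)

lemma jb_one_le (x : ℝ) : 1 ≤ jb x := by
  unfold jb; rw [Real.one_le_sqrt]; nlinarith [sq_nonneg x]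

lemma jb_pos (x : ℝ) : 0 < jb x := lt_of_lt_of_le one_pos (jb_one_le x)

lemma abs_le_jb (x : ℝ) : |x| ≤ jb x := by
  apply abs_le_of_sq_le_sq _ (jb_pos x).le
  rw [jb_sq]; linarith

lemma jb_add_le (x y : ℝ) : jb (x + y) ≤ jb x + jb y := by
  apply le_of_sq_le_sq _ (add_pos (jb_pos x) (jb_pos y)).le
  have h1 := abs_le_jb x
  have h2 := abs_le_jb y
  have h3 : x * y ≤ jb x * jb y := by
    calc x * y ≤ |x * y| := le_abs_self _
      _ = |x| * |y| := abs_mul _ _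
      _ ≤ _ := mul_le_mul h1 h2 (abs_nonneg _) (jb_pos x).le
  nlinarith [jb_sq x, jb_sq y, jb_sq (x+y)]

lemma jb_le_two_abs (k : ℤ) (hk : k ≠ 0) : jb (k:ℝ) ≤ 2 * |(k:ℝ)| := by
  have h1 : (1:ℝ) ≤ |(k:ℝ)| := by exact_mod_cast Int.one_le_abs hk
  apply le_of_sq_le_sq _ (by positivity)
  rw [jb_sq]
  nlinarith [sq_abs (k:ℝ)]

set_option maxHeartbeats 2000000 in
/-- Pointwise bound for one resonant factor. -/
lemma key (ρ ν s s₁ : ℝ) (h0 : ρ ≠ 0) (h1 : ρ ≠ 1) (hρ : IsOfType ρ ν) (hν : 0 ≤ ν)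
    (hs : 1/2 < s) (hA : s₁ - s < 1) (hB : s₁ - s < s - ν) :
    ∃ C > 0, ∀ k k₁ : ℤ, k ≠ 0 → k₁ ≠ 0 → 0 < |(k₁:ℝ) - ρ * k| ∧
      jb k ^ (2 * s₁) * ((k₁:ℝ)^2 * ((k₁:ℝ) - ρ * k)^2)⁻¹ ≤
        C * (jb (k₁:ℝ) ^ (-(2 * s)) + jb ((k - k₁ : ℤ):ℝ) ^ (-(2*s))
          + (jb ((k₁ - ⌊ρ * k⌋ : ℤ):ℝ) ^ 2)⁻¹) *
          (jb (k₁:ℝ) ^ (2 * s) * jb ((k - k₁ : ℤ):ℝ) ^ (2*s)) := by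
  obtain ⟨K, hK, hty⟩ := hρ
  obtain ⟨δ, hδ, hδ1, hδ2⟩ : ∃ δ > 0, 2 * δ ≤ |ρ| ∧ 2 * δ ≤ |1 - ρ| := by
    refine ⟨min |ρ| |1 - ρ| / 2, ?_, ?_, ?_⟩
    · have : 0 < |ρ| := abs_pos.mpr h0
      have : 0 < |1 - ρ| := abs_pos.mpr (sub_ne_zero.mpr h1.symm)
      positivity
    · linarith [min_le_left |ρ| |1 - ρ|]
    · linarith [min_le_right |ρ| |1 - ρ|]
  set C1 : ℝ := 4 / δ^2 * 2 ^ (2*s) with hC1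
  set C2 : ℝ := 12 / δ^2 * (1 + 1/K^2) * ((δ/2) ^ (4*s))⁻¹ with hC2
  have hC1p : 0 < C1 := by positivity
  have hC2p : 0 < C2 := by positivity
  refine ⟨C1 + C2, by positivity, ?_⟩
  intro k k₁ hk hk₁
  set x : ℝ := (k₁:ℝ) - ρ * k with hx
  have hkabs : (1:ℝ) ≤ |(k:ℝ)| := by exact_mod_cast Int.one_le_abs hk
  have hk₁abs : (1:ℝ) ≤ |(k₁:ℝ)| := by exact_mod_cast Int.one_le_abs hk₁
  set J := jb (k:ℝ) with hJ
  have hJ1 : 1 ≤ J := jb_one_le _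
  have hJ0 : 0 < J := jb_pos _
  have hkJ : |(k:ℝ)| ≤ J := abs_le_jb _
  have hJk : J ≤ 2 * |(k:ℝ)| := jb_le_two_abs k hk
  have hxlow : K / J ^ (1 + ν) ≤ |x| := by
    have h := hty k₁ k hk
    have hkr : (k:ℝ) ≠ 0 := by exact_mod_cast hk
    have e : |x| = |ρ - (k₁:ℝ)/k| * |(k:ℝ)| := by
      rw [← abs_mul, hx, ← abs_neg]; congr 1; field_simp; ring
    rw [e]
    calc K / J ^ (1 + ν) ≤ K / |(k:ℝ)| ^ (1+ν) := by gcongr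
      _ = K / |(k:ℝ)| ^ (2+ν) * |(k:ℝ)| := by
        rw [show 2 + ν = (1+ν) + 1 by ring, Real.rpow_add_one (by positivity)]
        field_simp
      _ ≤ _ := by gcongr
  have hx0 : 0 < |x| := lt_of_lt_of_le (by positivity) hxlow
  refine ⟨hx0, ?_⟩
  set J1 := jb (k₁:ℝ) with hJJ1
  set J2 := jb ((k - k₁ : ℤ):ℝ) with hJJ2
  set N := jb ((k₁ - ⌊ρ * k⌋ : ℤ):ℝ) with hN
  have hJ1p : 0 < J1 := jb_pos _
  have hJ2p : 0 < J2 := jb_pos _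
  have hNp : 0 < N := jb_pos _
  have hk₁sq : (k₁:ℝ)^2 = |(k₁:ℝ)|^2 := (sq_abs _).symm
  have hxsq : x^2 = |x|^2 := (sq_abs _).symm
  rw [hk₁sq, hxsq]
  rcases le_or_gt (δ * |(k:ℝ)|) |x| with hcase | hcase
  · have hxJ : δ * J / 2 ≤ |x| := by nlinarith
    have hm : J ^ (2*s) ≤ 2 ^ (2*s) * (J1 ^ (2*s) + J2 ^ (2*s)) := by
      have hsum : J ≤ J1 + J2 := by
        have := jb_add_le (k₁:ℝ) ((k - k₁ : ℤ):ℝ)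
        have e : (k₁:ℝ) + ((k - k₁ : ℤ):ℝ) = k := by push_cast; ring
        rwa [e] at this
      rcases le_total J1 J2 with h | h
      · calc J ^ (2*s) ≤ (2 * J2) ^ (2*s) := by
              apply Real.rpow_le_rpow hJ0.le (by linarith) (by linarith)
          _ = 2 ^ (2*s) * J2 ^ (2*s) := Real.mul_rpow (by norm_num) hJ2p.le
          _ ≤ _ := by gcongr; linarith [Real.rpow_pos_of_pos hJ1p (2*s)]
      · calc J ^ (2*s) ≤ (2 * J1) ^ (2*s) := by
              apply Real.rpow_le_rpow hJ0.le (by linarith) (by linarith)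
          _ = 2 ^ (2*s) * J1 ^ (2*s) := Real.mul_rpow (by norm_num) hJ1p.le
          _ ≤ _ := by gcongr; linarith [Real.rpow_pos_of_pos hJ2p (2*s)]
    have hinv : (|(k₁:ℝ)|^2 * |x|^2)⁻¹ ≤ 4 / δ^2 * (J^2)⁻¹ := by
      calc (|(k₁:ℝ)|^2 * |x|^2)⁻¹ ≤ (1^2 * (δ * J/2)^2)⁻¹ := by gcongr
        _ = _ := by field_simp; norm_num
    calc J ^ (2*s₁) * (|(k₁:ℝ)|^2 * |x|^2)⁻¹ ≤ J ^ (2*s₁) * (4 / δ^2 * (J^2)⁻¹) := by gcongr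
      _ = 4 / δ^2 * J ^ (2*s₁ - 2) := by
          rw [Real.rpow_sub hJ0, Real.rpow_two]; field_simp
      _ ≤ 4 / δ^2 * J ^ (2*s) := by
          gcongr 4 / δ^2 * ?_
          exact Real.rpow_le_rpow_of_exponent_le hJ1 (by linarith)
      _ ≤ 4 / δ^2 * (2 ^ (2*s) * (J1 ^ (2*s) + J2 ^ (2*s))) := by gcongr
      _ = C1 * (J1 ^ (-(2 * s)) + J2 ^ (-(2*s)) + 0) * (J1 ^ (2 * s) * J2 ^ (2*s)) := by
          rw [Real.rpow_neg hJ1p.le, Real.rpow_neg hJ2p.le, hC1]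
          have := Real.rpow_pos_of_pos hJ1p (2*s)
          have := Real.rpow_pos_of_pos hJ2p (2*s)
          field_simp; ring
      _ ≤ _ := by
          gcongr
          · linarith
          · positivity
  · have a1 : δ * |(k:ℝ)| ≤ |(k₁:ℝ)| := by
      have : |ρ| * |(k:ℝ)| ≤ |(k₁:ℝ)| + |x| := by
        rw [← abs_mul]
        have e : ρ * k = k₁ - x := by rw [hx]; ring
        rw [e]; exact abs_sub _ _
      nlinarith
    have a2 : δ * |(k:ℝ)| ≤ |((k - k₁ : ℤ):ℝ)| := by
      have : |1 - ρ| * |(k:ℝ)| ≤ |((k - k₁ : ℤ):ℝ)| + |x| := by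
        rw [← abs_mul]
        have e : (1 - ρ) * k = ((k - k₁ : ℤ):ℝ) + x := by rw [hx]; push_cast; ring
        rw [e]; exact abs_add_le _ _
      nlinarith
    have b0 : δ/2 * J ≤ |(k₁:ℝ)| := by nlinarith
    have b1 : δ/2 * J ≤ J1 := b0.trans (abs_le_jb _)
    have b2 : δ/2 * J ≤ J2 := by
      refine le_trans ?_ (abs_le_jb _)
      nlinarith
    have hprod : (δ/2) ^ (4*s) * J ^ (4*s) ≤ J1 ^ (2*s) * J2 ^ (2*s) := by
      calc (δ/2) ^ (4*s) * J ^ (4*s) = (δ/2*J)^(4*s) := (Real.mul_rpow (by positivity) hJ0.le).symm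
        _ = (δ/2*J)^(2*s) * (δ/2*J)^(2*s) := by
            rw [← Real.rpow_add (by positivity)]; congr 1; ring
        _ ≤ _ := by gcongr
    have hNle : N^2 ≤ 3 * (1 + |x|^2) := by
      rw [hN, jb_sq, ← hxsq]
      push_cast
      have f1 := Int.floor_le (ρ * k)
      have f2 := Int.lt_floor_add_one (ρ * k)
      set n : ℝ := (⌊ρ * k⌋ : ℝ)
      have e : (k₁:ℝ) - n = x + (ρ * k - n) := by rw [hx]; ring
      rw [e]
      set y := ρ * k - n
      have y0 : 0 ≤ y := by simp only [y]; linarith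
      have y1 : y ≤ 1 := by simp only [y]; linarith
      nlinarith [sq_nonneg (x - y)]
    have hxx : (1 + |x|^2) * (|x|^2)⁻¹ ≤ (1 + 1/K^2) * J ^ (2 + 2*ν) := by
      have e1 : (|x|^2)⁻¹ ≤ 1/K^2 * J ^ (2 + 2*ν) := by
        calc (|x|^2)⁻¹ ≤ ((K / J ^ (1 + ν))^2)⁻¹ := by gcongr
          _ = 1/K^2 * (J ^ (1+ν) * J ^ (1+ν)) := by field_simp
          _ = _ := by rw [← Real.rpow_add hJ0]; congr 2; ring
      have e2 : 1 ≤ J ^ (2 + 2*ν) := Real.one_le_rpow hJ1 (by linarith)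
      have e3 : (1 + |x|^2) * (|x|^2)⁻¹ = (|x|^2)⁻¹ + 1 := by field_simp
      rw [e3]; linarith
    have hk1inv : (|(k₁:ℝ)|^2)⁻¹ ≤ 4 / δ^2 * (J^2)⁻¹ := by
      calc (|(k₁:ℝ)|^2)⁻¹ ≤ ((δ/2 * J)^2)⁻¹ := by gcongr
        _ = _ := by field_simp; norm_num
    have hmain : J ^ (2*s₁) * (|(k₁:ℝ)|^2 * |x|^2)⁻¹ * N^2 ≤ C2 * (J1 ^ (2*s) * J2 ^ (2*s)) := by
      calc J ^ (2*s₁) * (|(k₁:ℝ)|^2 * |x|^2)⁻¹ * N^2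
          ≤ J ^ (2*s₁) * (|(k₁:ℝ)|^2 * |x|^2)⁻¹ * (3 * (1 + |x|^2)) := by gcongr
        _ = 3 * J ^ (2*s₁) * (|(k₁:ℝ)|^2)⁻¹ * ((1 + |x|^2) * (|x|^2)⁻¹) := by
            rw [mul_inv]; ring
        _ ≤ 3 * J ^ (2*s₁) * (4 / δ^2 * (J^2)⁻¹) * ((1 + 1/K^2) * J ^ (2 + 2*ν)) := by gcongr
        _ = 12 / δ^2 * (1 + 1/K^2) * J ^ (2*s₁ + 2*ν) := by
            rw [Real.rpow_add hJ0, Real.rpow_add hJ0, Real.rpow_two]; field_simp; ring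
        _ ≤ 12 / δ^2 * (1 + 1/K^2) * J ^ (4*s) := by
            gcongr _ * ?_
            exact Real.rpow_le_rpow_of_exponent_le hJ1 (by linarith)
        _ = C2 * ((δ/2) ^ (4*s) * J ^ (4*s)) := by
            rw [hC2]
            have : 0 < (δ/2) ^ (4*s) := by positivity
            field_simp
        _ ≤ _ := by gcongr
    calc J ^ (2*s₁) * (|(k₁:ℝ)|^2 * |x|^2)⁻¹
        = (J ^ (2*s₁) * (|(k₁:ℝ)|^2 * |x|^2)⁻¹ * N^2) * (N^2)⁻¹ := by
          field_simp
      _ ≤ (C2 * (J1 ^ (2*s) * J2 ^ (2*s))) * (N^2)⁻¹ := by gcongr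
      _ = C2 * (0 + 0 + (N^2)⁻¹) * (J1 ^ (2*s) * J2 ^ (2*s)) := by ring
      _ ≤ _ := by
          gcongr
          · linarith
          · positivity
          · positivity

lemma jb_summable (p : ℝ) (hp : 1 < p) : Summable (fun n : ℤ => jb (n:ℝ) ^ (-p)) := by
  have h := (Real.summable_abs_int_rpow hp)
  refine Summable.of_norm_bounded_eventually h ?_
  have : ∀ᶠ n : ℤ in Filter.cofinite, n ≠ 0 := by
    exact Filter.eventually_cofinite_ne 0
  filter_upwards [this] with n hn
  have hn' : (0:ℝ) < |(n:ℝ)| := by positivity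
  rw [Real.norm_of_nonneg (Real.rpow_nonneg (jb_pos _).le _)]
  exact Real.rpow_le_rpow_of_nonpos hn' (abs_le_jb _) (by linarith)

/-- Abstract Cauchy–Schwarz step. -/
lemma schur (w : ℤ → ℝ) (hw : ∀ k, 0 < w k) (t : ℤ → ℤ → ℂ) (A B : ℤ → ℝ) (hA : ∀ m, 0 ≤ A m)
    (hB : ∀ m, 0 ≤ B m) (sA : Summable A) (sB : Summable B) (G : ℤ → ℤ → ℝ)
    (hG : ∀ k m, 0 ≤ G k m) (C : ℝ) (hGC : ∀ k, HasSum (G k) C)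
    (hb : ∀ k m, w k * ‖t k m‖^2 ≤ G k m * (A m * B (k - m))) :
    (∀ k, Summable (t k)) ∧ Summable (fun k => w k * ‖∑' m, t k m‖^2) ∧
      ∑' k, w k * ‖∑' m, t k m‖^2 ≤ C * (∑' m, A m) * (∑' m, B m) := by
  let e : ℤ × ℤ ≃ ℤ × ℤ :=
    { toFun := fun p => (p.2, p.1 - p.2)
      invFun := fun p => (p.1 + p.2, p.1)
      left_inv := fun p => by simp
      right_inv := fun p => by simp }
  have sP : Summable (fun p : ℤ × ℤ => A p.1 * B p.2) := sA.mul_of_nonneg sB hA hB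
  have sF : Summable (fun p : ℤ × ℤ => A p.2 * B (p.1 - p.2)) := (e.summable_iff).mpr sP
  have tF : ∑' k, ∑' m, A m * B (k - m) = (∑' m, A m) * (∑' m, B m) := by
    rw [← sF.tsum_prod, sA.tsum_mul_tsum sB sP]
    exact e.tsum_eq (fun p : ℤ × ℤ => A p.1 * B p.2)
  have sFk : ∀ k, Summable (fun m => A m * B (k - m)) := fun k => sF.prod_factor k
  have sFs : Summable (fun k => ∑' m, A m * B (k - m)) := sF.prod
  have cs : ∀ k, Summable (t k) ∧ w k * ‖∑' m, t k m‖^2 ≤ C * ∑' m, A m * B (k - m) := by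
    intro k
    have hF0 : ∀ m, 0 ≤ A m * B (k - m) := fun m => mul_nonneg (hA _) (hB _)
    have hC0 : 0 ≤ C := (hGC k).nonneg (hG k)
    have hs := Real.summable_mul_of_Lp_Lq_of_nonneg Real.HolderConjugate.two_two
      (f := fun m => √(G k m)) (g := fun m => √(A m * B (k - m)))
      (fun m => Real.sqrt_nonneg _) (fun m => Real.sqrt_nonneg _)
      (by simpa [Real.sq_sqrt, hG] using (hGC k).summable)
      (by simpa only [Real.rpow_two, Real.sq_sqrt (hF0 _)] using sFk k)
    have hle := Real.inner_le_Lp_mul_Lq_tsum_of_nonneg Real.HolderConjugate.two_two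
      (f := fun m => √(G k m)) (g := fun m => √(A m * B (k - m)))
      (fun m => Real.sqrt_nonneg _) (fun m => Real.sqrt_nonneg _)
      (by simpa [Real.sq_sqrt, hG] using (hGC k).summable)
      (by simpa only [Real.rpow_two, Real.sq_sqrt (hF0 _)] using sFk k)
    simp only [Real.rpow_two, Real.sq_sqrt (hF0 _), Real.sq_sqrt (hG _ _), (hGC k).tsum_eq,
      ← Real.sqrt_eq_rpow] at hle
    have hpt : ∀ m, √(w k) * ‖t k m‖ ≤ √(G k m) * √(A m * B (k - m)) := by
      intro m
      rw [← Real.sqrt_mul (hG _ _)]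
      apply Real.le_sqrt_of_sq_le
      rw [mul_pow, Real.sq_sqrt (hw k).le]
      exact hb k m
    have hw' : 0 < √(w k) := Real.sqrt_pos.mpr (hw k)
    have s1 : Summable (fun m => √(w k) * ‖t k m‖) :=
      Summable.of_nonneg_of_le (fun m => by positivity) hpt hs
    have s2 : Summable (fun m => ‖t k m‖) := (summable_mul_left_iff hw'.ne').mp s1
    refine ⟨s2.of_norm, ?_⟩
    have h3 : √(w k) * ‖∑' m, t k m‖ ≤ √C * √(∑' m, A m * B (k - m)) := by
      calc √(w k) * ‖∑' m, t k m‖ ≤ √(w k) * ∑' m, ‖t k m‖ := by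
            gcongr; exact norm_tsum_le_tsum_norm s2
        _ = ∑' m, √(w k) * ‖t k m‖ := tsum_mul_left.symm
        _ ≤ ∑' m, √(G k m) * √(A m * B (k - m)) := s1.tsum_le_tsum hpt hs
        _ ≤ _ := hle
    have h4 := pow_le_pow_left₀ (by positivity) h3 2
    rwa [mul_pow, mul_pow, Real.sq_sqrt (hw k).le, Real.sq_sqrt hC0,
      Real.sq_sqrt (tsum_nonneg hF0)] at h4
  have sR : Summable (fun k => C * ∑' m, A m * B (k - m)) := sFs.mul_left C
  have sL : Summable (fun k => w k * ‖∑' m, t k m‖^2) :=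
    Summable.of_nonneg_of_le (fun k => mul_nonneg (hw k).le (sq_nonneg _)) (fun k => (cs k).2) sR
  refine ⟨fun k => (cs k).1, sL, ?_⟩
  calc _ ≤ ∑' k, C * ∑' m, A m * B (k - m) := sL.tsum_le_tsum (fun k => (cs k).2) sR
    _ = _ := by rw [tsum_mul_left, tF, mul_assoc]

lemma roots_facts (α : ℝ) (h0 : 0 < α) (h1 : α < 1) :
    d1 α ≠ 0 ∧ d1 α ≠ 1 ∧ d2 α ≠ 0 ∧ d2 α ≠ 1 ∧ d1 α ≠ d2 α ∧
    ∀ k k₁ : ℝ, α * k^3 - k₁^3 - α * (k - k₁)^3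
      = -(1 - α) * k₁ * (k₁ - d1 α * k) * (k₁ - d2 α * k) := by
  set r := Real.sqrt (12/α - 3) with hr
  have hlt : 9 < 12/α - 3 := by
    have : 12 < 12/α := by rw [lt_div_iff₀ h0]; linarith
    linarith
  have hr3 : 3 < r := by
    rw [hr]; apply Real.lt_sqrt_of_sq_lt; linarith
  have hr2 : r^2 = 12/α - 3 := Real.sq_sqrt (by linarith)
  have hr2' : α * r^2 = 12 - 3 * α := by rw [hr2]; field_simp
  have e1 : c1 α = 1/2 + r/6 := rfl
  have e2 : c2 α = 1/2 - r/6 := rfl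
  have p1 : 1 < c1 α := by rw [e1]; linarith
  have p2 : c2 α < 0 := by rw [e2]; linarith
  have q1 : d1 α * c1 α = 1 := by unfold d1; field_simp
  have q2 : d2 α * c2 α = 1 := by unfold d2; exact inv_mul_cancel₀ p2.ne
  have hsum : c1 α + c2 α = 1 := by rw [e1, e2]; ring
  have hprod : 3 * α * (c1 α * c2 α) = α - 1 := by rw [e1, e2]; linear_combination (-1/12) * hr2'
  have hdp : (1 - α) * (d1 α * d2 α) = -3 * α := by
    linear_combination (d1 α * d2 α) * hprod - 3 * α * d2 α * c2 α * q1 - 3 * α * q2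
  have hds : (1 - α) * (d1 α + d2 α) = -3 * α := by
    have : d1 α + d2 α = d1 α * d2 α := by
      linear_combination d1 α * d2 α * hsum - d2 α * q1 - d1 α * q2
    rw [this, hdp]
  refine ⟨?_, ?_, ?_, ?_, ?_, ?_⟩
  · intro h; rw [h] at q1; simp at q1
  · intro h; rw [h] at q1; linarith
  · intro h; rw [h] at q2; simp at q2
  · intro h; rw [h] at q2; linarith
  · intro h
    have : c1 α = c2 α := by
      have : c1 α * (d2 α * c2 α) = c2 α * (d1 α * c1 α) := by rw [h]; ring
      rw [q1, q2] at this; linarith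
    linarith
  · intro k k₁
    linear_combination (-k₁^2 * k) * hds + k₁ * k^2 * hdp

set_option maxHeartbeats 2000000 in
/-- The bilinear `H^{s₁} × H^s × H^s` estimate for `B₂`: if `α ∈ (0,1)`, `d₁, d₂` are of type
`ν ≥ 0`, `s > 1/2` and `s₁ − s < min{1, s − ν}`, then for all `a, b` with `a₀ = 0`,
`Σ_k ⟨k⟩^{2s₁} |Σ_{k₁ ≠ 0} k·a_{k₁}·b_{k−k₁}/(αk³ − k₁³ − α(k−k₁)³)|²
  ≤ C (Σ_m ⟨m⟩^{2s}|a_m|²)(Σ_n ⟨n⟩^{2s}|b_n|²)`. -/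
theorem B2_bilinear_estimate (α : ℝ) (hα : α ∈ Set.Ioo (0 : ℝ) 1) (ν : ℝ) (hν : 0 ≤ ν)
    (hd1 : IsOfType (d1 α) ν) (hd2 : IsOfType (d2 α) ν)
    (s s₁ : ℝ) (hs : 1/2 < s) (hs₁ : s₁ - s < min 1 (s - ν)) :
    ∃ C > 0, ∀ a b : ℤ → ℂ, a 0 = 0 →
      Summable (fun m : ℤ => jb (m : ℝ) ^ (2 * s) * ‖a m‖^2) →
      Summable (fun n : ℤ => jb (n : ℝ) ^ (2 * s) * ‖b n‖^2) →
      (∀ k : ℤ, Summable (fun k₁ : ℤ => B2term α a b k k₁)) ∧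
      Summable (fun k : ℤ => jb (k : ℝ) ^ (2 * s₁) * ‖∑' k₁ : ℤ, B2term α a b k k₁‖^2) ∧
      (∑' k : ℤ, jb (k : ℝ) ^ (2 * s₁) * ‖∑' k₁ : ℤ, B2term α a b k k₁‖^2)
        ≤ C * (∑' m : ℤ, jb (m : ℝ) ^ (2 * s) * ‖a m‖^2)
            * (∑' n : ℤ, jb (n : ℝ) ^ (2 * s) * ‖b n‖^2) := by
  obtain ⟨hα0, hα1⟩ := hα
  obtain ⟨n10, n11, n20, n21, hne, hfac⟩ := roots_facts α hα0 hα1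
  have hA : s₁ - s < 1 := lt_of_lt_of_le hs₁ (min_le_left _ _)
  have hB : s₁ - s < s - ν := lt_of_lt_of_le hs₁ (min_le_right _ _)
  obtain ⟨C1, hC1, hk1⟩ := key (d1 α) ν s s₁ n10 n11 hd1 hν hs hA hB
  obtain ⟨C2, hC2, hk2⟩ := key (d2 α) ν s s₁ n20 n21 hd2 hν hs hA hB
  set Δ := d1 α - d2 α with hΔ
  have hΔ0 : Δ ≠ 0 := sub_ne_zero.mpr hne
  set c : ℝ := 2 / ((1 - α)^2 * Δ^2) with hc
  have hα' : 0 < 1 - α := by linarith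
  have hc0 : 0 < c := by positivity
  let W : ℤ → ℝ := fun n => jb (n:ℝ) ^ (-(2*s))
  let U : ℤ → ℝ := fun n => (jb (n:ℝ) ^ 2)⁻¹
  have hW0 : ∀ n, 0 < W n := fun n => Real.rpow_pos_of_pos (jb_pos _) _
  have hU0 : ∀ n, 0 < U n := fun n => inv_pos.mpr (pow_pos (jb_pos _) 2)
  have sW : Summable W := jb_summable (2*s) (by linarith)
  have sU : Summable U := by
    have := jb_summable 2 (by norm_num)
    refine this.congr fun n => ?_
    rw [Real.rpow_neg (jb_pos _).le, Real.rpow_two]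
  let G : ℤ → ℤ → ℝ := fun k m => c * (C1 * (W m + W (k - m) + U (m - ⌊d1 α * k⌋))
    + C2 * (W m + W (k - m) + U (m - ⌊d2 α * k⌋)))
  let C : ℝ := c * (C1 * ((∑' n, W n) + (∑' n, W n) + ∑' n, U n)
    + C2 * ((∑' n, W n) + (∑' n, W n) + ∑' n, U n))
  have hG : ∀ k m, 0 < G k m := by
    intro k m
    have := hW0 m; have := hW0 (k-m)
    have := hU0 (m - ⌊d1 α * k⌋); have := hU0 (m - ⌊d2 α * k⌋)
    simp only [G]; positivity
  have hGC : ∀ k, HasSum (G k) C := by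
    intro k
    have hw1 := sW.hasSum
    have hw2 : HasSum (fun m => W (k - m)) (∑' n, W n) :=
      (Equiv.subLeft k).hasSum_iff.mpr hw1
    have hu : ∀ j : ℤ, HasSum (fun m => U (m - j)) (∑' n, U n) := fun j =>
      (Equiv.subRight j).hasSum_iff.mpr sU.hasSum
    exact ((((hw1.add hw2).add (hu _)).mul_left C1).add
      (((hw1.add hw2).add (hu _)).mul_left C2)).mul_left c
  have hCpos : 0 < C := by
    have h := (hGC 0).summable.tsum_pos (fun m => (hG 0 m).le) 0 (hG 0 0)
    rwa [(hGC 0).tsum_eq] at h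
  refine ⟨C, hCpos, ?_⟩
  intro a b ha sa sb
  refine schur (fun k => jb (k:ℝ) ^ (2*s₁)) (fun k => Real.rpow_pos_of_pos (jb_pos _) _)
    (B2term α a b) _ _ (fun m => ?_) (fun m => ?_) sa sb G (fun k m => (hG k m).le) C hGC ?_
  · have := jb_pos (m:ℝ); positivity
  · have := jb_pos (m:ℝ); positivity
  intro k m
  have hnn : 0 ≤ G k m * (jb (m:ℝ) ^ (2 * s) * ‖a m‖^2 *
      (jb ((k - m : ℤ):ℝ) ^ (2 * s) * ‖b (k - m)‖^2)) := by
    have := jb_pos (m:ℝ); have := jb_pos ((k - m : ℤ):ℝ); have := hG k m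
    positivity
  rcases eq_or_ne m 0 with hm | hm
  · have : B2term α a b k m = 0 := by simp [B2term, hm]
    rw [this]; simpa using hnn
  rcases eq_or_ne k 0 with hk | hk
  · have : B2term α a b k m = 0 := by simp [B2term, hk]
    rw [this]; simpa using hnn
  obtain ⟨x0, b1⟩ := hk1 k m hk hm
  obtain ⟨y0, b2⟩ := hk2 k m hk hm
  have ht : ‖B2term α a b k m‖^2 = ‖a m‖^2 * ‖b (k-m)‖^2 *
      ((k:ℝ)^2 / ((1-α)^2 * (m:ℝ)^2 * ((m:ℝ) - d1 α * k)^2 * ((m:ℝ) - d2 α * k)^2)) := by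
    rw [B2term, if_neg hm, hfac, norm_div, norm_mul, norm_mul, Complex.norm_real,
      Complex.norm_intCast, Real.norm_eq_abs, div_pow, sq_abs, mul_pow, mul_pow, sq_abs]
    ring
  rw [ht]
  set x := (m:ℝ) - d1 α * k with hx
  set y := (m:ℝ) - d2 α * k with hy
  have hx' : x ≠ 0 := abs_pos.mp x0
  have hy' : y ≠ 0 := abs_pos.mp y0
  have hkr : (k:ℝ) ≠ 0 := by exact_mod_cast hk
  have hmr : (m:ℝ) ≠ 0 := by exact_mod_cast hm
  have hxy : (k:ℝ)^2 / ((1-α)^2 * (m:ℝ)^2 * x^2 * y^2)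
      ≤ c * (((m:ℝ)^2 * x^2)⁻¹ + ((m:ℝ)^2 * y^2)⁻¹) := by
    have h1 : Δ^2 * (k:ℝ)^2 ≤ 2 * (x^2 + y^2) := by
      have : Δ * k = y - x := by rw [hΔ, hx, hy]; ring
      rw [← mul_pow, this]; nlinarith [sq_nonneg (x+y)]
    have h2 : c * (((m:ℝ)^2 * x^2)⁻¹ + ((m:ℝ)^2 * y^2)⁻¹)
        = (2 * (x^2 + y^2) / Δ^2) / ((1-α)^2 * (m:ℝ)^2 * x^2 * y^2) := by
      rw [hc]; field_simp; ring
    rw [h2]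
    gcongr
    rw [le_div_iff₀ (by positivity)]; linarith
  set J := jb (k:ℝ) ^ (2*s₁) with hJ
  have hJ0 : 0 < J := Real.rpow_pos_of_pos (jb_pos _) _
  calc J * (‖a m‖^2 * ‖b (k-m)‖^2 * ((k:ℝ)^2 / ((1-α)^2 * (m:ℝ)^2 * x^2 * y^2)))
      ≤ J * (‖a m‖^2 * ‖b (k-m)‖^2 * (c * (((m:ℝ)^2 * x^2)⁻¹ + ((m:ℝ)^2 * y^2)⁻¹))) := by gcongr
    _ = ‖a m‖^2 * ‖b (k-m)‖^2 * (c * (J * ((m:ℝ)^2 * x^2)⁻¹ + J * ((m:ℝ)^2 * y^2)⁻¹)) := by ring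
    _ ≤ _ := by
      refine (mul_le_mul_of_nonneg_left (mul_le_mul_of_nonneg_left (add_le_add b1 b2) hc0.le)
        (by positivity)).trans (le_of_eq ?_)
      simp only [G, W, U]
      ring
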